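/- arXiv:2107.11846 — 3 statements merged into one kernel-verified Lean document; each statement's English description precedes it below -/
import Mathlib

section
/- For every m > 0 and δ > 0 there exist h > 0 and C = C(h,δ) > 0 such that for all t > 0 the following holds: if Y° is a real random variable satisfying E[exp(λ·Y°)] = exp( Q ∫_{(0,ht]} (e^{λv} − 1 − λv) μ^{ℓ,r}_t(dv) ) for all λ > 0 (the small-jump part of the Telecom process with splitting point v₀ = ht), then P(Y° ≥ δt) ≤ C·t^{−(γ−1)m}. -/
open MeasureTheory Filter Set
open scoped ENNReal NNReal Topology

noncomputable section

/-- `ℓ_t(s,u)`: the length of the interval `[s,s+u] ∩ [0,t]`. -/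
def ellK (t s u : ℝ) : ℝ := max 0 (min (s + u) t - max s 0)

/-- The intensity measure `u^{-γ-1} du` on `(0,∞)`. -/
def muU (γ : ℝ) : Measure ℝ :=
  (volume.restrict (Set.Ioi 0)).withDensity fun u => ENNReal.ofReal (u ^ (-γ - 1))

/-- The measure `μ^ℓ_t` on `(0,∞)`:
`μ^ℓ_t(A) = ∫_ℝ ∫_0^∞ 1{ℓ_t(s,u) ∈ A} u^{-γ-1} du ds`. -/
def muEll (γ t : ℝ) : Measure ℝ :=
  (Measure.map (fun p : ℝ × ℝ => ellK t p.1 p.2)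
    ((volume : Measure ℝ).prod (muU γ))).restrict (Set.Ioi 0)

/-- The measure `μ^{ℓ,r}_t` on `(0,∞)`:
`μ^{ℓ,r}_t(A) = ∫_{(0,∞)} ∫_{(0,∞)} 1{rℓ ∈ A} μ^ℓ_t(dℓ) F_R(dr)`. -/
def muEllR (γ t : ℝ) (FR : Measure ℝ) : Measure ℝ :=
  (Measure.map (fun p : ℝ × ℝ => p.1 * p.2) (FR.prod (muEll γ t))).restrict (Set.Ioi 0)

/-- The measure `ν` on `[0,1]`: density `s^{-(γ+1)} + ((2-γ)/γ)·s^{-γ}` on `(0,1)` with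
respect to Lebesgue measure, together with an atom of mass `1/(γ(γ-1))` at the point `1`. -/
def nuM (γ : ℝ) : Measure ℝ :=
  (volume.restrict (Set.Ioo 0 1)).withDensity
      (fun s => ENNReal.ofReal (s ^ (-(γ + 1)) + (2 - γ) / γ * s ^ (-γ)))
    + (Real.toNNReal (1 / (γ * (γ - 1)))) • Measure.dirac 1

instance nuM.sigmaFinite (γ : ℝ) : SigmaFinite (nuM γ) := by
  unfold nuM; infer_instance

end

/-!
Exponential tilting by `λ = c log t / t` turns `P(Y° ≥ δt)` into `t ^ (-cδ)` times the moment
generating function at `λ`. On jumps `v ≤ ht` one has `e^{λv} - 1 - λv ≤ λ² e^{λht} v²`, where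
`e^{λht} = t ^ (ch)`, so only the second moment of the jumps of size at most `x = ht` matters. For
`μ^ℓ_t` this moment is `O(t x^{2-γ})`, and independent multiplication by `R` preserves such a bound
because `E[R^γ] < ∞`. The exponent is therefore `O(t ^ (ch + 1 - γ) log² t)`, which is bounded as
soon as `ch < γ - 1`.
-/

/-- The second moment of the jumps of size in `(0, x]` under the jump measure `μ`; it is the
variance per unit intensity of the compensated small jumps. It takes values in `ℝ≥0∞`, so that it
is meaningful without any integrability. -/
noncomputable def smallJumpVariance (μ : Measure ℝ) (x : ℝ) : ℝ≥0∞ :=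
  ∫⁻ v in Ioc 0 x, ENNReal.ofReal (v ^ 2) ∂μ

namespace smallJumpVariance

variable {α β : Type*} [MeasurableSpace α] [MeasurableSpace β]

theorem restrict_Ioi (μ : Measure ℝ) (x : ℝ) :
    smallJumpVariance (μ.restrict (Ioi 0)) x = smallJumpVariance μ x := by
  rw [smallJumpVariance, Measure.restrict_restrict measurableSet_Ioc,
    inter_eq_left.2 Ioc_subset_Ioi_self, smallJumpVariance]

theorem map {f : α → ℝ} (hf : Measurable f) (μ : Measure α) (x : ℝ) :
    smallJumpVariance (μ.map f) x = ∫⁻ a in f ⁻¹' Ioc 0 x, ENNReal.ofReal (f a ^ 2) ∂μ :=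
  setLIntegral_map measurableSet_Ioc (by fun_prop) hf

theorem map_prod {f : α × β → ℝ} (hf : Measurable f) (μ : Measure α) (ν : Measure β) [SFinite ν]
    (x : ℝ) :
    smallJumpVariance ((μ.prod ν).map f) x
      = ∫⁻ a, smallJumpVariance (ν.map fun b => f (a, b)) x ∂μ := by
  have hpre : MeasurableSet (f ⁻¹' Ioc 0 x) := hf measurableSet_Ioc
  rw [map hf, ← lintegral_indicator hpre, lintegral_prod _ (by fun_prop (disch := exact hpre))]
  refine lintegral_congr fun a => ?_
  have hfa : Measurable fun b => f (a, b) := by fun_prop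
  rw [map hfa, ← lintegral_indicator (hfa measurableSet_Ioc)]
  rfl

theorem map_mul_left {r : ℝ} (hr : 0 < r) (μ : Measure ℝ) (x : ℝ) :
    smallJumpVariance (μ.map (r * ·)) x
      = ENNReal.ofReal (r ^ 2) * smallJumpVariance μ (x / r) := by
  have hpre : (r * ·) ⁻¹' Ioc 0 x = Ioc 0 (x / r) := by
    rw [preimage_const_mul_Ioc₀ _ _ hr, zero_div]
  rw [map (by fun_prop), hpre, smallJumpVariance, ← lintegral_const_mul _ (by fun_prop)]
  simp_rw [mul_pow, ENNReal.ofReal_mul (sq_nonneg r)]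

theorem map_eq_zero_of_ae_nonpos {f : α → ℝ} (hf : Measurable f) {μ : Measure α}
    (hf0 : ∀ᵐ a ∂μ, f a ≤ 0) (x : ℝ) : smallJumpVariance (μ.map f) x = 0 := by
  rw [map hf]
  refine setLIntegral_measure_zero _ _ (measure_mono_null (fun a ha => ?_) hf0)
  exact not_le.2 ha.1

/-- The bound `A x^{2-γ}` scales like `r^γ` under dilation by `r`, which is where the moment of
order `γ` of the independent factor enters. -/
theorem map_mul_prod_le {γ A : ℝ} (hA : 0 ≤ A) {F μ : Measure ℝ} [SFinite μ]
    (hμ0 : ∀ᵐ v ∂μ, 0 < v)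
    (hμ : ∀ x, 0 < x → smallJumpVariance μ x ≤ ENNReal.ofReal (A * x ^ (2 - γ)))
    (hF : IntegrableOn (fun r => r ^ γ) (Ioi 0) F) {x : ℝ} (hx : 0 < x) :
    smallJumpVariance ((F.prod μ).map fun p => p.1 * p.2) x
      ≤ ENNReal.ofReal (A * x ^ (2 - γ) * ∫ r in Ioi 0, r ^ γ ∂F) := by
  have hrpow_nonneg : ∀ᵐ r ∂F.restrict (Ioi 0), 0 ≤ r ^ γ :=
    (ae_restrict_mem measurableSet_Ioi).mono fun r (hr : 0 < r) => by positivity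
  rw [map_prod (by fun_prop), ENNReal.ofReal_mul (by positivity),
    ofReal_integral_eq_lintegral_ofReal hF hrpow_nonneg, ← lintegral_const_mul _ (by fun_prop),
    ← lintegral_indicator measurableSet_Ioi]
  refine lintegral_mono fun r => ?_
  rcases lt_or_ge 0 r with hr | hr
  · have hscale : r ^ 2 * (A * (x / r) ^ (2 - γ)) = A * x ^ (2 - γ) * r ^ γ := by
      rw [Real.div_rpow hx.le hr.le, Real.rpow_sub hr, Real.rpow_two]
      field_simp
    calc smallJumpVariance (μ.map (r * ·)) x
        ≤ ENNReal.ofReal (r ^ 2) * ENNReal.ofReal (A * (x / r) ^ (2 - γ)) := by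
          rw [map_mul_left hr]
          gcongr
          exact hμ _ (div_pos hx hr)
      _ = _ := by
          rw [indicator_of_mem (mem_Ioi.2 hr), ← ENNReal.ofReal_mul (sq_nonneg r), hscale,
            ENNReal.ofReal_mul (by positivity)]
  · refine (map_eq_zero_of_ae_nonpos (by fun_prop) ?_ x).trans_le zero_le
    exact hμ0.mono fun v hv => mul_nonpos_of_nonpos_of_nonneg hr hv.le

end smallJumpVariance

theorem lintegral_Ioc_rpow {r y : ℝ} (hr : -1 < r) (hy : 0 ≤ y) :
    ∫⁻ u in Ioc 0 y, ENNReal.ofReal (u ^ r) = ENNReal.ofReal (y ^ (r + 1) / (r + 1)) := by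
  have hint : IntegrableOn (fun u : ℝ => u ^ r) (Ioc 0 y) :=
    (intervalIntegral.intervalIntegrable_rpow' hr).1
  have hnonneg : ∀ᵐ u : ℝ ∂volume.restrict (Ioc 0 y), 0 ≤ u ^ r :=
    (ae_restrict_mem measurableSet_Ioc).mono fun u hu => Real.rpow_nonneg hu.1.le r
  rw [← ofReal_integral_eq_lintegral_ofReal hint hnonneg, ← intervalIntegral.integral_of_le hy,
    integral_rpow (.inl hr), Real.zero_rpow (by linarith), sub_zero]

theorem lintegral_Ioi_rpow {r y : ℝ} (hr : r < -1) (hy : 0 < y) :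
    ∫⁻ u in Ioi y, ENNReal.ofReal (u ^ r) = ENNReal.ofReal (-y ^ (r + 1) / (r + 1)) := by
  have hnonneg : ∀ᵐ u : ℝ ∂volume.restrict (Ioi y), 0 ≤ u ^ r :=
    (ae_restrict_mem measurableSet_Ioi).mono fun u hu => Real.rpow_nonneg (hy.trans hu).le r
  rw [← ofReal_integral_eq_lintegral_ofReal (integrableOn_Ioi_rpow_of_lt hr hy) hnonneg,
    integral_Ioi_rpow_of_lt hr hy]

theorem lintegral_min_rpow_mul_rpow {a p y : ℝ} (ha : 0 < a) (hap : a < p) (hy : 0 < y) :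
    ∫⁻ u in Ioi 0, ENNReal.ofReal (min u y ^ p * u ^ (-a - 1))
      = ENNReal.ofReal ((1 / (p - a) + 1 / a) * y ^ (p - a)) := by
  have : 0 < p - a := sub_pos.2 hap
  have hsmall : ∫⁻ u in Ioc 0 y, ENNReal.ofReal (min u y ^ p * u ^ (-a - 1))
      = ENNReal.ofReal (y ^ (p - a) / (p - a)) := by
    have hcongr : ∀ u ∈ Ioc 0 y,
        ENNReal.ofReal (min u y ^ p * u ^ (-a - 1)) = ENNReal.ofReal (u ^ (p - a - 1)) := by
      rintro u ⟨hu, huy⟩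
      rw [min_eq_left huy, ← Real.rpow_add hu]
      ring_nf
    rw [setLIntegral_congr_fun measurableSet_Ioc hcongr, lintegral_Ioc_rpow (by linarith) hy.le,
      sub_add_cancel]
  have hlarge : ∫⁻ u in Ioi y, ENNReal.ofReal (min u y ^ p * u ^ (-a - 1))
      = ENNReal.ofReal (y ^ (p - a) / a) := by
    have hcongr : ∀ u ∈ Ioi y, ENNReal.ofReal (min u y ^ p * u ^ (-a - 1))
        = ENNReal.ofReal (y ^ p) * ENNReal.ofReal (u ^ (-a - 1)) := by
      intro u hu
      rw [min_eq_right (le_of_lt hu), ENNReal.ofReal_mul (by positivity)]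
    rw [setLIntegral_congr_fun measurableSet_Ioi hcongr, lintegral_const_mul _ (by fun_prop),
      lintegral_Ioi_rpow (by linarith) hy, ← ENNReal.ofReal_mul (by positivity), sub_add_cancel,
      neg_div_neg_eq, sub_eq_add_neg, Real.rpow_add hy, mul_div_assoc]
  rw [← Ioc_union_Ioi_eq_Ioi hy.le, lintegral_union measurableSet_Ioi (Ioc_disjoint_Ioi le_rfl),
    hsmall, hlarge, ← ENNReal.ofReal_add (by positivity) (by positivity)]
  ring_nf

instance muU.sFinite (γ : ℝ) : SFinite (muU γ) := by
  unfold muU; infer_instance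

instance muEll.sFinite (γ t : ℝ) : SFinite (muEll γ t) := by
  unfold muEll; infer_instance

theorem ae_muU_pos (γ : ℝ) : ∀ᵐ u ∂muU γ, 0 < u :=
  (withDensity_absolutelyContinuous _ _).ae_le (ae_restrict_mem measurableSet_Ioi)

theorem ae_muEll_pos (γ t : ℝ) : ∀ᵐ v ∂muEll γ t, 0 < v :=
  ae_restrict_mem measurableSet_Ioi

theorem lintegral_min_rpow_muU {γ p y : ℝ} (hγ : 0 < γ) (hγp : γ < p) (hy : 0 < y) :
    ∫⁻ u, ENNReal.ofReal (min u y ^ p) ∂muU γ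
      = ENNReal.ofReal ((1 / (p - γ) + 1 / γ) * y ^ (p - γ)) := by
  rw [← lintegral_min_rpow_mul_rpow hγ hγp hy, muU,
    lintegral_withDensity_eq_lintegral_mul _ (by fun_prop) (by fun_prop)]
  refine setLIntegral_congr_fun measurableSet_Ioi fun u (hu : 0 < u) => ?_
  rw [Pi.mul_apply, mul_comm, ENNReal.ofReal_mul (by positivity)]

theorem exists_lintegral_min_sq_muU_eq {γ : ℝ} (hγ0 : 0 < γ) (hγ2 : γ < 2) :
    ∃ K, 0 ≤ K ∧ ∀ y, 0 < y →
      ∫⁻ u, ENNReal.ofReal (min u y ^ 2) ∂muU γ = ENNReal.ofReal (K * y ^ (2 - γ)) := by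
  have : 0 < 2 - γ := sub_pos.2 hγ2
  refine ⟨1 / (2 - γ) + 1 / γ, by positivity, fun y hy => ?_⟩
  simpa only [Real.rpow_two] using lintegral_min_rpow_muU hγ0 hγ2 hy

theorem lintegral_mul_ofReal_muU (γ : ℝ) {f : ℝ → ℝ≥0∞} (hf : Measurable f) :
    ∫⁻ u, f u * ENNReal.ofReal u ∂muU γ = ∫⁻ u, f u ∂muU (γ - 1) := by
  rw [muU, muU, lintegral_withDensity_eq_lintegral_mul _ (by fun_prop) (by fun_prop),
    lintegral_withDensity_eq_lintegral_mul _ (by fun_prop) hf]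
  refine setLIntegral_congr_fun measurableSet_Ioi fun u (hu : 0 < u) => ?_
  have hrpow : u ^ (-γ - 1) * u = u ^ (-(γ - 1) - 1) := by
    rw [← Real.rpow_add_one hu.ne']
    ring_nf
  rw [Pi.mul_apply, Pi.mul_apply, mul_left_comm, ← ENNReal.ofReal_mul (by positivity), hrpow,
    mul_comm]

theorem exists_lintegral_min_sq_mul_add_muU_le {γ : ℝ} (hγ1 : 1 < γ) (hγ2 : γ < 2) :
    ∃ K, 0 ≤ K ∧ ∀ t y, 0 < y → y ≤ t →
      ∫⁻ u, ENNReal.ofReal (min u y ^ 2) * ENNReal.ofReal (t + u) ∂muU γ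
        ≤ ENNReal.ofReal (K * t * y ^ (2 - γ)) := by
  have hγ0 : 0 < γ := by linarith
  have hγ1' : 0 < γ - 1 := sub_pos.2 hγ1
  have hγ2' : γ - 1 < 2 := by linarith
  obtain ⟨A, hA, hmoment⟩ := exists_lintegral_min_sq_muU_eq hγ0 hγ2
  obtain ⟨B, hB, hmoment'⟩ := exists_lintegral_min_sq_muU_eq hγ1' hγ2'
  refine ⟨A + B, by positivity, fun t y hy hyt => ?_⟩
  have ht : 0 < t := hy.trans_le hyt
  have hpow : y ^ (2 - (γ - 1)) ≤ t * y ^ (2 - γ) := by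
    rw [show 2 - (γ - 1) = 1 + (2 - γ) by ring, Real.rpow_add hy, Real.rpow_one]
    gcongr
  have hsplit : ∀ᵐ u ∂muU γ, ENNReal.ofReal (min u y ^ 2) * ENNReal.ofReal (t + u)
      = ENNReal.ofReal (min u y ^ 2) * ENNReal.ofReal t
        + ENNReal.ofReal (min u y ^ 2) * ENNReal.ofReal u :=
    (ae_muU_pos γ).mono fun u hu => by rw [ENNReal.ofReal_add ht.le hu.le, mul_add]
  calc ∫⁻ u, ENNReal.ofReal (min u y ^ 2) * ENNReal.ofReal (t + u) ∂muU γ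
      = ENNReal.ofReal (A * y ^ (2 - γ) * t + B * y ^ (2 - (γ - 1))) := by
        rw [lintegral_congr_ae hsplit, lintegral_add_left (by fun_prop),
          lintegral_mul_const _ (by fun_prop), lintegral_mul_ofReal_muU γ (by fun_prop),
          hmoment y hy, hmoment' y hy, ← ENNReal.ofReal_mul (by positivity),
          ← ENNReal.ofReal_add (by positivity) (by positivity)]
    _ ≤ ENNReal.ofReal (A * y ^ (2 - γ) * t + B * (t * y ^ (2 - γ))) := by gcongr
    _ = ENNReal.ofReal ((A + B) * t * y ^ (2 - γ)) := by ring_nf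

theorem measurable_ellK (t : ℝ) : Measurable fun p : ℝ × ℝ => ellK t p.1 p.2 := by
  unfold ellK; fun_prop

theorem ellK_le_min {t s u : ℝ} (ht : 0 ≤ t) (hu : 0 ≤ u) : ellK t s u ≤ min u t := by
  have hs := le_max_left s 0
  have h0 := le_max_right s 0
  have hsu := min_le_left (s + u) t
  have hst := min_le_right (s + u) t
  exact max_le (le_min hu ht) (le_min (by linarith) (by linarith))

theorem mem_Ioo_of_ellK_pos {t s u : ℝ} (h : 0 < ellK t s u) : s ∈ Ioo (-u) t := by
  have hmax : max s 0 < min (s + u) t := by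
    simpa only [ellK, lt_max_iff, lt_irrefl, false_or, sub_pos] using h
  exact ⟨by linarith [le_max_right s 0, min_le_left (s + u) t],
    (le_max_left s 0).trans_lt (hmax.trans_le (min_le_right _ t))⟩

theorem smallJumpVariance_map_ellK_le {t u x : ℝ} (ht : 0 ≤ t) (hu : 0 ≤ u) :
    smallJumpVariance (volume.map fun s => ellK t s u) x
      ≤ ENNReal.ofReal (min u (min x t) ^ 2) * ENNReal.ofReal (t + u) := by
  have hmeas : Measurable fun s => ellK t s u := (measurable_ellK t).comp measurable_prodMk_right
  have hbound : ∀ s ∈ (ellK t · u) ⁻¹' Ioc 0 x,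
      ENNReal.ofReal (ellK t s u ^ 2) ≤ ENNReal.ofReal (min u (min x t) ^ 2) := by
    rintro s ⟨hpos, hle⟩
    have hmin := le_min_iff.1 (ellK_le_min (s := s) ht hu)
    gcongr
    exact le_min hmin.1 (le_min hle hmin.2)
  calc smallJumpVariance (volume.map fun s => ellK t s u) x
      = ∫⁻ s in (ellK t · u) ⁻¹' Ioc 0 x, ENNReal.ofReal (ellK t s u ^ 2) :=
        smallJumpVariance.map hmeas _ _
    _ ≤ ∫⁻ _ in (ellK t · u) ⁻¹' Ioc 0 x, ENNReal.ofReal (min u (min x t) ^ 2) :=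
        setLIntegral_mono measurable_const hbound
    _ ≤ ∫⁻ _ in Ioo (-u) t, ENNReal.ofReal (min u (min x t) ^ 2) :=
        lintegral_mono_set fun _ hs => mem_Ioo_of_ellK_pos hs.1
    _ = _ := by rw [setLIntegral_const, Real.volume_Ioo, sub_neg_eq_add]

theorem smallJumpVariance_muEll_eq (γ t x : ℝ) :
    smallJumpVariance (muEll γ t) x
      = ∫⁻ u, smallJumpVariance (volume.map fun s => ellK t s u) x ∂muU γ := by
  have hmeas := (measurable_ellK t).comp measurable_swap
  rw [muEll, smallJumpVariance.restrict_Ioi, ← Measure.prod_swap,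
    Measure.map_map (measurable_ellK t) measurable_swap, smallJumpVariance.map_prod hmeas]
  rfl

theorem exists_smallJumpVariance_muEll_le {γ : ℝ} (hγ1 : 1 < γ) (hγ2 : γ < 2) :
    ∃ K, 0 ≤ K ∧ ∀ t x, 0 < t → 0 < x →
      smallJumpVariance (muEll γ t) x ≤ ENNReal.ofReal (K * t * x ^ (2 - γ)) := by
  obtain ⟨K, hK, hmuU⟩ := exists_lintegral_min_sq_mul_add_muU_le hγ1 hγ2
  refine ⟨K, hK, fun t x ht hx => ?_⟩
  calc smallJumpVariance (muEll γ t) x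
      = ∫⁻ u, smallJumpVariance (volume.map fun s => ellK t s u) x ∂muU γ :=
        smallJumpVariance_muEll_eq γ t x
    _ ≤ ∫⁻ u, ENNReal.ofReal (min u (min x t) ^ 2) * ENNReal.ofReal (t + u) ∂muU γ :=
        lintegral_mono_ae <| (ae_muU_pos γ).mono fun u hu =>
          smallJumpVariance_map_ellK_le ht.le hu.le
    _ ≤ ENNReal.ofReal (K * t * min x t ^ (2 - γ)) := hmuU t _ (lt_min hx ht) (min_le_right x t)
    _ ≤ ENNReal.ofReal (K * t * x ^ (2 - γ)) := by
        gcongr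
        exact min_le_left x t

theorem exists_smallJumpVariance_muEllR_le {γ : ℝ} (hγ1 : 1 < γ) (hγ2 : γ < 2) {FR : Measure ℝ}
    (hmom : IntegrableOn (fun r => r ^ γ) (Ioi 0) FR) :
    ∃ K, 0 ≤ K ∧ ∀ t x, 0 < t → 0 < x →
      smallJumpVariance (muEllR γ t FR) x ≤ ENNReal.ofReal (K * t * x ^ (2 - γ)) := by
  obtain ⟨K, hK, hmuEll⟩ := exists_smallJumpVariance_muEll_le hγ1 hγ2
  have hM : 0 ≤ ∫ r in Ioi 0, r ^ γ ∂FR :=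
    setIntegral_nonneg measurableSet_Ioi fun r (hr : 0 < r) => by positivity
  refine ⟨K * ∫ r in Ioi 0, r ^ γ ∂FR, by positivity, fun t x ht hx => ?_⟩
  rw [muEllR, smallJumpVariance.restrict_Ioi]
  refine (smallJumpVariance.map_mul_prod_le (A := K * t) (by positivity) (ae_muEll_pos γ t)
    (fun x hx => hmuEll t x ht hx) hmom hx).trans_eq ?_
  ring_nf

theorem exp_sub_one_sub_le_sq_mul_exp {x : ℝ} (hx : 0 ≤ x) :
    Real.exp x - 1 - x ≤ x ^ 2 * Real.exp x := by
  have hexp : Real.exp x - 1 ≤ x * Real.exp x := by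
    have h := mul_le_mul_of_nonneg_right (Real.one_sub_le_exp_neg x) (Real.exp_pos x).le
    rw [← Real.exp_add, neg_add_cancel, Real.exp_zero] at h
    linarith
  calc Real.exp x - 1 - x ≤ x * (Real.exp x - 1) := by linarith
    _ ≤ x * (x * Real.exp x) := by gcongr
    _ = x ^ 2 * Real.exp x := by ring

theorem setIntegral_exp_sub_one_sub_le {ν : Measure ℝ} {l x S : ℝ} (hl : 0 ≤ l) (hS : 0 ≤ S)
    (hν : smallJumpVariance ν x ≤ ENNReal.ofReal S) :
    ∫ v in Ioc 0 x, (Real.exp (l * v) - 1 - l * v) ∂ν ≤ l ^ 2 * Real.exp (l * x) * S := by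
  have hbound : ∀ v ∈ Ioc 0 x,
      Real.exp (l * v) - 1 - l * v ≤ l ^ 2 * Real.exp (l * x) * v ^ 2 := by
    rintro v ⟨hv, hvx⟩
    calc Real.exp (l * v) - 1 - l * v
        ≤ (l * v) ^ 2 * Real.exp (l * v) := exp_sub_one_sub_le_sq_mul_exp (by positivity)
      _ ≤ (l * v) ^ 2 * Real.exp (l * x) := by gcongr
      _ = l ^ 2 * Real.exp (l * x) * v ^ 2 := by ring
  have hnonneg : ∀ v, 0 ≤ Real.exp (l * v) - 1 - l * v := fun v => by
    linarith [Real.add_one_le_exp (l * v)]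
  rw [integral_eq_lintegral_of_nonneg_ae (.of_forall hnonneg)
    (Continuous.aestronglyMeasurable (by fun_prop))]
  refine ENNReal.toReal_le_of_le_ofReal (by positivity) ?_
  calc ∫⁻ v in Ioc 0 x, ENNReal.ofReal (Real.exp (l * v) - 1 - l * v) ∂ν
      ≤ ∫⁻ v in Ioc 0 x, ENNReal.ofReal (l ^ 2 * Real.exp (l * x)) * ENNReal.ofReal (v ^ 2) ∂ν := by
        refine setLIntegral_mono (by fun_prop) fun v hv => ?_
        rw [← ENNReal.ofReal_mul (by positivity)]
        exact ENNReal.ofReal_le_ofReal (hbound v hv)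
    _ = ENNReal.ofReal (l ^ 2 * Real.exp (l * x)) * smallJumpVariance ν x :=
        lintegral_const_mul _ (by fun_prop)
    _ ≤ ENNReal.ofReal (l ^ 2 * Real.exp (l * x) * S) := by
        rw [ENNReal.ofReal_mul (p := l ^ 2 * Real.exp (l * x)) (by positivity)]
        gcongr

theorem sq_log_le_mul_rpow {a t : ℝ} (ha : 0 < a) (ht : 1 ≤ t) :
    Real.log t ^ 2 ≤ (2 / a) ^ 2 * t ^ a := by
  have ht0 : 0 ≤ t := zero_le_one.trans ht
  have hlog : Real.log t ≤ 2 / a * t ^ (a / 2) :=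
    (Real.log_le_rpow_div ht0 (half_pos ha)).trans_eq (by field_simp)
  calc Real.log t ^ 2 ≤ (2 / a * t ^ (a / 2)) ^ 2 := by
        gcongr
        exact Real.log_nonneg ht
    _ = (2 / a) ^ 2 * t ^ a := by
        rw [mul_pow, ← Real.rpow_mul_natCast ht0]
        push_cast
        rw [div_mul_cancel₀ a two_ne_zero]

theorem exp_mul_log {b t : ℝ} (ht : 0 < t) : Real.exp (b * Real.log t) = t ^ b := by
  rw [mul_comm, Real.rpow_def_of_pos ht]

theorem sq_tilt_mul_exp_mul_rpow_le {γ K c h t : ℝ} (hK : 0 ≤ K) (hh : 0 < h)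
    (hch : c * h < γ - 1) (ht : 1 ≤ t) :
    (c * Real.log t / t) ^ 2 * Real.exp (c * Real.log t / t * (h * t))
        * (K * t * (h * t) ^ (2 - γ))
      ≤ K * h ^ (2 - γ) * (2 * c / (γ - 1 - c * h)) ^ 2 := by
  have ht0 : 0 < t := zero_lt_one.trans_le ht
  set a := γ - 1 - c * h with ha
  have ha0 : 0 < a := sub_pos.2 hch
  have hexp : Real.exp (c * Real.log t / t * (h * t)) = t ^ (c * h) := by
    rw [← exp_mul_log ht0]
    field_simp
  have hpow : t ^ (c * h) * t ^ (2 - γ) * t ^ a = t := by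
    have hsum : c * h + (2 - γ) + a = 1 := by rw [ha]; ring
    rw [← Real.rpow_add ht0, ← Real.rpow_add ht0, hsum, Real.rpow_one]
  rw [hexp, Real.mul_rpow hh.le ht0.le]
  calc (c * Real.log t / t) ^ 2 * t ^ (c * h) * (K * t * (h ^ (2 - γ) * t ^ (2 - γ)))
      = K * h ^ (2 - γ) * c ^ 2 * (t ^ (c * h) * t ^ (2 - γ) / t) * Real.log t ^ 2 := by
        field_simp
    _ ≤ K * h ^ (2 - γ) * c ^ 2 * (t ^ (c * h) * t ^ (2 - γ) / t) * ((2 / a) ^ 2 * t ^ a) := by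
        gcongr
        exact sq_log_le_mul_rpow ha0 ht
    _ = K * h ^ (2 - γ) * (2 * c / a) ^ 2 * (t ^ (c * h) * t ^ (2 - γ) * t ^ a / t) := by ring
    _ = K * h ^ (2 - γ) * (2 * c / a) ^ 2 := by rw [hpow, div_self ht0.ne', mul_one]

section Chernoff

variable {Ω : Type*} [MeasurableSpace Ω] {P : Measure Ω} [IsFiniteMeasure P] {Y : Ω → ℝ}

theorem measureReal_ge_le_of_integral_exp_eq {l b : ℝ} (hl : 0 ≤ l)
    (hY : ∫ ω, Real.exp (l * Y ω) ∂P = Real.exp b) (a : ℝ) :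
    P.real {ω | a ≤ Y ω} ≤ Real.exp (b - l * a) := by
  have hint : Integrable (fun ω => Real.exp (l * Y ω)) P :=
    .of_integral_ne_zero (hY ▸ (Real.exp_pos b).ne')
  refine (ProbabilityTheory.measure_ge_le_exp_mul_mgf a hl hint).trans_eq ?_
  rw [ProbabilityTheory.mgf, hY, ← Real.exp_add]
  ring_nf

theorem measureReal_ge_le_of_smallJumpVariance_le {γ Q K c h t δ : ℝ} {ν : Measure ℝ}
    (hQ : 0 ≤ Q) (hK : 0 ≤ K) (hc : 0 ≤ c) (hh : 0 < h) (hch : c * h < γ - 1) (ht : 1 ≤ t)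
    (hν : smallJumpVariance ν (h * t) ≤ ENNReal.ofReal (K * t * (h * t) ^ (2 - γ)))
    (hY : ∫ ω, Real.exp (c * Real.log t / t * Y ω) ∂P
      = Real.exp (Q * ∫ v in Ioc 0 (h * t),
          (Real.exp (c * Real.log t / t * v) - 1 - c * Real.log t / t * v) ∂ν)) :
    P.real {ω | δ * t ≤ Y ω}
      ≤ Real.exp (Q * (K * h ^ (2 - γ) * (2 * c / (γ - 1 - c * h)) ^ 2)) * t ^ (-(c * δ)) := by
  have ht0 : 0 < t := zero_lt_one.trans_le ht
  have hl : 0 ≤ c * Real.log t / t := by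
    have := Real.log_nonneg ht
    positivity
  have hexponent := (setIntegral_exp_sub_one_sub_le hl (by positivity) hν).trans
    (sq_tilt_mul_exp_mul_rpow_le hK hh hch ht)
  have htilt : c * Real.log t / t * (δ * t) = c * δ * Real.log t := by field_simp
  refine (measureReal_ge_le_of_integral_exp_eq hl hY _).trans ?_
  rw [← exp_mul_log ht0, ← Real.exp_add, htilt, neg_mul, ← sub_eq_add_neg]
  gcongr

end Chernoff

theorem stmt_5_general {γ Q : ℝ} (hγ1 : 1 < γ) (hγ2 : γ < 2) (hQ : 0 ≤ Q) {FR : Measure ℝ}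
    (hmom : IntegrableOn (fun r => r ^ γ) (Ioi 0) FR) {m δ : ℝ} (hm : 0 < m) (hδ : 0 < δ) :
    ∃ h > (0 : ℝ), ∃ C > (0 : ℝ), ∀ t : ℝ, 0 < t →
      ∀ (Ω : Type*) [MeasurableSpace Ω] (P : Measure Ω) [IsProbabilityMeasure P] (Y : Ω → ℝ),
        (∀ l : ℝ, 0 < l →
          ∫ ω, Real.exp (l * Y ω) ∂P
            = Real.exp (Q * ∫ v in Ioc 0 (h * t),
                (Real.exp (l * v) - 1 - l * v) ∂(muEllR γ t FR))) →
        P.real {ω | δ * t ≤ Y ω} ≤ C * t ^ (-(γ - 1) * m) := by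
  obtain ⟨K, hK, hvar⟩ := exists_smallJumpVariance_muEllR_le hγ1 hγ2 hmom
  have hγ : 0 < γ - 1 := sub_pos.2 hγ1
  -- `c` makes `t ^ (-cδ)` the required power; any `h` with `ch < γ - 1` would do.
  let c := (γ - 1) * m / δ
  let h := δ / (2 * m)
  have hc : 0 < c := by positivity
  have hh : 0 < h := by positivity
  have hcδ : -(c * δ) = -(γ - 1) * m := by simp only [c]; field_simp
  have hch : c * h < γ - 1 := by
    have hhalf : c * h = (γ - 1) / 2 := by simp only [c, h]; field_simp
    linarith
  let B := Q * (K * h ^ (2 - γ) * (2 * c / (γ - 1 - c * h)) ^ 2)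
  refine ⟨h, hh, Real.exp B, Real.exp_pos B, fun t ht Ω _ P _ Y hY => ?_⟩
  rcases le_or_gt t 1 with ht1 | ht1
  · have hpow : 1 ≤ t ^ (-(γ - 1) * m) :=
      Real.one_le_rpow_of_pos_of_le_one_of_nonpos ht ht1 (by nlinarith)
    have hB : 1 ≤ Real.exp B := Real.one_le_exp (by positivity)
    exact measureReal_le_one.trans (one_le_mul_of_one_le_of_one_le hB hpow)
  · have hlog : 0 < Real.log t := Real.log_pos ht1
    rw [← hcδ]
    exact measureReal_ge_le_of_smallJumpVariance_le hQ hK hc.le hh hch ht1.le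
      (hvar t _ ht (by positivity)) (hY _ (by positivity))

/-- Exponential estimate for the small-jump part: for every `m, δ > 0` there are `h > 0` and
`C > 0` such that for all `t > 0`, any random variable `Y°` (on any probability space) with
`E exp(λY°) = exp(Q ∫_{(0,ht]} (e^{λv} - 1 - λv) μ^{ℓ,r}_t(dv))` for all `λ > 0` satisfies
`P(Y° ≥ δt) ≤ C·t^{-(γ-1)m}`. -/
theorem stmt_5 (γ Q : ℝ) (hγ1 : 1 < γ) (hγ2 : γ < 2) (hQ : 0 < Q)
    (FR : Measure ℝ) [IsProbabilityMeasure FR] (hFRpos : FR (Set.Iic 0) = 0)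
    (hmom : Integrable (fun r => r ^ γ) FR)
    (m δ : ℝ) (hm : 0 < m) (hδ : 0 < δ) :
    ∃ h > (0 : ℝ), ∃ C > (0 : ℝ), ∀ t : ℝ, 0 < t →
      ∀ (Ω : Type) [MeasurableSpace Ω] (P : Measure Ω) [IsProbabilityMeasure P],
        ∀ Ycirc : Ω → ℝ,
          (∀ l : ℝ, 0 < l →
            ∫ ω, Real.exp (l * Ycirc ω) ∂P
              = Real.exp (Q * ∫ v in Set.Ioc 0 (h * t),
                  (Real.exp (l * v) - 1 - l * v) ∂(muEllR γ t FR))) →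
          (P {ω | δ * t ≤ Ycirc ω}).toReal ≤ C * t ^ (-(γ - 1) * m) := by
  exact stmt_5_general hγ1 hγ2 hQ.le hmom.integrableOn hm hδ
end

section
/- Let κ > 0, let n be a positive integer, and let R₁,…,Rₙ be independent copies of R with P(R₁ + ⋯ + Rₙ = κ) = 0. Then the set { (s₁,…,sₙ) ∈ [0,1]ⁿ : P(s₁R₁ + ⋯ + sₙRₙ = κ) > 0 } has νⁿ-measure zero, where νⁿ denotes the n-fold product of the measure ν. -/
open MeasureTheory Filter Set
open scoped ENNReal NNReal Topology

/-!
Exchanging `P` and `νⁿ` by Fubini, it suffices that for almost every value `x` of `(R₁, …, Rₙ)` the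
hyperplane `∑ᵢ sᵢ xᵢ = κ` is `νⁿ`-null. Almost surely every `xᵢ` is nonzero and the hyperplane
misses the point `(1, …, 1)`, so each of its points has some coordinate `sᵢ ≠ 1`. The other
coordinates determine this `sᵢ`, and `ν` has no atom other than `1`.
-/

section ProductMeasure

variable {ι : Type*} [Fintype ι] [DecidableEq ι] {α : ι → Type*} [∀ i, MeasurableSpace (α i)]
  {ν : ∀ i, Measure (α i)} [∀ i, SigmaFinite (ν i)] {S : Set (∀ i, α i)}

lemma measure_pi_null_of_ae_update_notMem (hS : MeasurableSet S) (i : ι)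
    (h : ∀ s, ∀ᵐ t ∂ν i, Function.update s i t ∉ S) : Measure.pi ν S = 0 := by
  obtain rfl | ⟨s, -⟩ := S.eq_empty_or_nonempty
  · exact measure_empty
  have slice_null (s : ∀ i, α i) : ∫⁻ t, S.indicator 1 (Function.update s i t) ∂ν i = 0 :=
    lintegral_eq_zero_of_ae_eq_zero <|
      (h s).mono fun _ ht ↦ indicator_of_notMem ht _
  calc Measure.pi ν S
      = (∫⋯∫⁻_Finset.univ, S.indicator 1 ∂ν) s := by
        rw [← lintegral_indicator_one hS, lintegral_eq_lmarginal_univ s]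
    _ = (∫⋯∫⁻_Finset.univ.erase i, fun _ ↦ 0 ∂ν) s := by
        rw [lmarginal_erase' _ (measurable_one.indicator hS) (Finset.mem_univ i)]
        simp only [slice_null]
    _ = 0 := lintegral_zero

lemma measure_pi_null_of_subsingleton_slices [∀ i, MeasurableSingletonClass (α i)]
    {p : ∀ i, α i} (hν : ∀ i, ∀ a ≠ p i, ν i {a} = 0) (hS : MeasurableSet S) (hp : p ∉ S)
    (hslice : ∀ i s, {t | Function.update s i t ∈ S}.Subsingleton) : Measure.pi ν S = 0 := by
  have cover : S ⊆ ⋃ i, S ∩ {s | s i ≠ p i} := fun s hs ↦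
    have ⟨i, hi⟩ := Function.ne_iff.mp (ne_of_mem_of_not_mem hs hp)
    mem_iUnion.mpr ⟨i, hs, hi⟩
  refine measure_mono_null cover (measure_iUnion_null fun i ↦ ?_)
  have measurable_piece : MeasurableSet (S ∩ {s | s i ≠ p i}) :=
    hS.inter (measurable_pi_apply i (measurableSet_singleton (p i)).compl)
  refine measure_pi_null_of_ae_update_notMem measurable_piece i fun s ↦ ?_
  by_cases hex : ∃ a ≠ p i, Function.update s i a ∈ S
  · obtain ⟨a, hap, haS⟩ := hex
    filter_upwards [compl_mem_ae_iff.mpr (hν i a hap)] with t hta ht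
    exact hta (hslice i s ht.1 haS)
  · refine .of_forall fun t ht ↦ hex ⟨t, ?_, ht.1⟩
    simpa only [mem_ofPred_eq, Function.update_self] using ht.2

end ProductMeasure

section RandomLinearForm

variable {ι 𝕜 E : Type*} [Fintype ι] [Ring 𝕜] [IsDomain 𝕜] [MeasurableSpace 𝕜]
  [MeasurableSingletonClass 𝕜] [AddCommGroup E] [Module 𝕜 E] [Module.IsTorsionFree 𝕜 E]
  [MeasurableSpace E] [MeasurableSingletonClass E] [MeasurableAdd₂ E] [MeasurableSMul₂ 𝕜 E]
  {ν : ι → Measure 𝕜} [∀ i, SigmaFinite (ν i)] {p : ι → 𝕜}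

lemma measure_pi_sum_smul_eq_null (hν : ∀ i, ∀ a ≠ p i, ν i {a} = 0) {x : ι → E}
    (hx : ∀ i, x i ≠ 0) {c : E} (hc : ∑ i, p i • x i ≠ c) :
    Measure.pi ν {s | ∑ i, s i • x i = c} = 0 := by
  classical
  have measurable_form : Measurable fun s : ι → 𝕜 ↦ ∑ i, s i • x i := by fun_prop
  refine measure_pi_null_of_subsingleton_slices hν
    (measurable_form (measurableSet_singleton c)) hc fun i s t ht u hu ↦ ?_
  have sum_update (t : 𝕜) : ∑ j, Function.update s i t j • x j =
      t • x i + ∑ j ∈ Finset.univ.erase i, s j • x j := by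
    rw [← Finset.add_sum_erase _ _ (Finset.mem_univ i), Function.update_self]
    exact congrArg _ <| Finset.sum_congr rfl fun j hj ↦ by
      rw [Function.update_of_ne (Finset.ne_of_mem_erase hj)]
  have hsmul : t • x i = u • x i :=
    add_right_cancel <| (sum_update t).symm.trans <| (ht.trans hu.symm).trans (sum_update u)
  exact smul_left_injective 𝕜 (hx i) hsmul

theorem stmt_6_general {Ω : Type*} [MeasurableSpace Ω] {μ : Measure Ω} [SFinite μ]
    {R : ι → Ω → E} (hR : ∀ i, Measurable (R i)) (hR₀ : ∀ i, ∀ᵐ ω ∂μ, R i ω ≠ 0)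
    (hν : ∀ i, ∀ a ≠ p i, ν i {a} = 0) {κ : E} (hκ : μ {ω | ∑ i, p i • R i ω = κ} = 0) :
    ∀ᵐ s ∂Measure.pi ν, μ {ω | ∑ i, s i • R i ω = κ} = 0 := by
  have measurable_ne : MeasurableSet {q : Ω × (ι → 𝕜) | ∑ i, q.2 i • R i q.1 ≠ κ} :=
    have : Measurable fun q : Ω × (ι → 𝕜) ↦ ∑ i, q.2 i • R i q.1 := by fun_prop
    this (measurableSet_singleton κ).compl
  have ae_ne : ∀ᵐ ω ∂μ, ∀ᵐ s ∂Measure.pi ν, ∑ i, s i • R i ω ≠ κ := by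
    filter_upwards [ae_all_iff.mpr hR₀, compl_mem_ae_iff.mpr hκ] with ω hω hωκ
    exact compl_mem_ae_iff.mpr (measure_pi_sum_smul_eq_null hν hω hωκ)
  filter_upwards [(Measure.ae_ae_comm measurable_ne).mp ae_ne] with s hs
  exact compl_mem_ae_iff.mp hs

end RandomLinearForm

lemma nuM_singleton (γ : ℝ) {a : ℝ} (ha : a ≠ 1) : nuM γ {a} = 0 := by
  have density_null : (volume.restrict (Ioo 0 1)).withDensity
      (fun s ↦ ENNReal.ofReal (s ^ (-(γ + 1)) + (2 - γ) / γ * s ^ (-γ))) {a} = 0 :=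
    withDensity_absolutelyContinuous _ _ (measure_singleton a)
  have dirac_null : Measure.dirac (1 : ℝ) {a} = 0 := by
    rw [Measure.dirac_apply, indicator_of_notMem (notMem_singleton_iff.mpr ha.symm)]
  rw [nuM, Measure.add_apply, Measure.smul_apply, density_null, dirac_null, smul_zero, add_zero]

/-- If `P(R₁ + ⋯ + Rₙ = κ) = 0` for independent copies `R₁,…,Rₙ` of `R` (expressed via the
product measure `FRⁿ`), then the set
`{(s₁,…,sₙ) ∈ [0,1]ⁿ : P(s₁R₁ + ⋯ + sₙRₙ = κ) > 0}` is a `νⁿ`-null set. -/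
theorem stmt_6 (γ : ℝ) (hγ1 : 1 < γ) (hγ2 : γ < 2)
    (FR : Measure ℝ) [IsProbabilityMeasure FR] (hFRpos : FR (Set.Iic 0) = 0)
    (κ : ℝ) (hκ : 0 < κ) (n : ℕ) (hn : 0 < n)
    (hatom : (Measure.pi fun _ : Fin n => FR) {x | ∑ i, x i = κ} = 0) :
    (Measure.pi fun _ : Fin n => nuM γ)
      {s | (∀ i, s i ∈ Set.Icc (0 : ℝ) 1)
        ∧ 0 < (Measure.pi fun _ : Fin n => FR) {x | ∑ i, s i * x i = κ}} = 0 := by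
  have ae_ne_zero (i : Fin n) : ∀ᵐ x ∂Measure.pi fun _ : Fin n ↦ FR, x i ≠ 0 :=
    compl_mem_ae_iff.mpr <| Measure.pi_eval_preimage_null _ <|
      measure_mono_null (singleton_subset_iff.mpr self_mem_Iic) hFRpos
  have ae_null := stmt_6_general (p := 1) (ν := fun _ ↦ nuM γ) (κ := κ) measurable_pi_apply
    ae_ne_zero (fun _ _ ↦ nuM_singleton γ) (by simpa only [Pi.one_apply, one_smul] using hatom)
  exact measure_mono_null (fun _ hs ↦ hs.2.ne') ae_null
end

section
/- For every t > 0 and every ℓ₀ > 0, one has μ^ℓ_t([ℓ₀, ∞)) ≤ t·ℓ₀^{−γ}/(γ(γ−1)). -/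
open MeasureTheory Filter Set
open scoped ENNReal NNReal Topology

/-!
If `ℓ ≤ t` and `ℓ ≤ u`, the starting points `s` with `ℓ_t(s,u) ≥ ℓ` form the interval
`[ℓ - u, t - ℓ]`. By Tonelli, `μ^ℓ_t([ℓ,∞))` is therefore
`∫_ℓ^∞ u^{-γ-1} (t - 2ℓ + u) du = ℓ^{-γ} (t(γ-1) + ℓ(2-γ)) / (γ(γ-1))`.
Since `ℓ ≤ t` and `γ < 2`, the bracket is at most `t(γ-1) + t(2-γ) = t`.
If `ℓ > t`, no interval contributes.
-/

theorem le_ellK_iff {ℓ t s u : ℝ} (hℓ : 0 < ℓ) :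
    ℓ ≤ ellK t s u ↔ (ℓ ≤ t ∧ ℓ ≤ u) ∧ s ∈ Icc (ℓ - u) (t - ℓ) := by
  have hgap : ℓ ≤ min (s + u) t - max s 0 ↔
      max s 0 ≤ s + u - ℓ ∧ max s 0 ≤ t - ℓ := by
    rw [le_sub_comm, ← min_sub_sub_right, le_min_iff]
  rw [ellK, le_max_iff, or_iff_right hℓ.not_ge, hgap, max_le_iff, max_le_iff, mem_Icc]
  grind

theorem volume_setOf_le_ellK {ℓ t : ℝ} (hℓ : 0 < ℓ) (hℓt : ℓ ≤ t) (u : ℝ) :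
    volume {s | ℓ ≤ ellK t s u} =
      (Ici ℓ).indicator (fun u => ENNReal.ofReal (t - 2 * ℓ + u)) u := by
  simp only [le_ellK_iff hℓ, hℓt, true_and]
  by_cases hu : ℓ ≤ u
  · simp only [hu, true_and, ofPred_mem_eq, Real.volume_Icc, mem_Ici, indicator_of_mem]
    congr 1
    ring
  · simp only [hu, false_and, ofPred_false, measure_empty, mem_Ici, not_false_eq_true,
      indicator_of_notMem]

instance muU.instSFinite (γ : ℝ) : SFinite (muU γ) := by
  unfold muU
  infer_instance

theorem muEll_apply (γ t : ℝ) {A : Set ℝ} (hA : MeasurableSet A) (hA_pos : A ⊆ Ioi 0) :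
    muEll γ t A = ∫⁻ u, volume {s | ellK t s u ∈ A} ∂muU γ := by
  rw [muEll, Measure.restrict_eq_self _ hA_pos, Measure.map_apply (measurable_ellK t) hA,
    Measure.prod_apply_symm (measurable_ellK t hA)]
  rfl

theorem setLIntegral_muU (γ : ℝ) {A : Set ℝ} (hA : MeasurableSet A) (hA_pos : A ⊆ Ioi 0)
    (f : ℝ → ℝ≥0∞) :
    ∫⁻ u in A, f u ∂muU γ = ∫⁻ u in A, ENNReal.ofReal (u ^ (-γ - 1)) * f u := by
  rw [muU, setLIntegral_withDensity_eq_setLIntegral_mul_non_measurable _ (by fun_prop) f hA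
    (ae_of_all _ fun _ => ENNReal.ofReal_lt_top), Measure.restrict_restrict_of_subset hA_pos]
  rfl

theorem muEll_Ici_eq_zero (γ : ℝ) {ℓ t : ℝ} (hℓ : 0 < ℓ) (htℓ : t < ℓ) :
    muEll γ t (Ici ℓ) = 0 := by
  simp only [muEll_apply γ t measurableSet_Ici (Ici_subset_Ioi.2 hℓ), mem_Ici, le_ellK_iff hℓ,
    htℓ.not_ge, false_and, ofPred_false, measure_empty, lintegral_zero]

theorem muEll_Ici_eq_setLIntegral (γ : ℝ) {ℓ t : ℝ} (hℓ : 0 < ℓ) (hℓt : ℓ ≤ t) :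
    muEll γ t (Ici ℓ) =
      ∫⁻ u in Ioi ℓ, ENNReal.ofReal (u ^ (-γ - 1) * (t - 2 * ℓ + u)) := by
  simp only [muEll_apply γ t measurableSet_Ici (Ici_subset_Ioi.2 hℓ), mem_Ici,
    volume_setOf_le_ellK hℓ hℓt]
  rw [lintegral_indicator measurableSet_Ici, setLIntegral_muU γ measurableSet_Ici
    (Ici_subset_Ioi.2 hℓ), setLIntegral_congr Ioi_ae_eq_Ici.symm]
  refine setLIntegral_congr_fun measurableSet_Ioi fun u hu => ?_
  exact (ENNReal.ofReal_mul (Real.rpow_nonneg (hℓ.trans hu).le _)).symm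

theorem rpow_neg_sub_one_mul_add (γ c : ℝ) {u : ℝ} (hu : 0 < u) :
    u ^ (-γ - 1) * (c + u) = c * u ^ (-γ - 1) + u ^ (-γ) := by
  have hpow : u ^ (-γ) = u ^ (-γ - 1) * u := by
    rw [← Real.rpow_add_one hu.ne', sub_add_cancel]
  rw [hpow]
  ring

theorem integrableOn_Ioi_rpow_neg_sub_one_mul_add {γ ℓ : ℝ} (hγ : 1 < γ) (hℓ : 0 < ℓ)
    (c : ℝ) :
    IntegrableOn (fun u => u ^ (-γ - 1) * (c + u)) (Ioi ℓ) := by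
  refine IntegrableOn.congr_fun (f := fun u => c * u ^ (-γ - 1) + u ^ (-γ)) ?_
    (fun u hu => (rpow_neg_sub_one_mul_add γ c (hℓ.trans hu)).symm) measurableSet_Ioi
  exact ((integrableOn_Ioi_rpow_of_lt (by linarith) hℓ).const_mul c).add
    (integrableOn_Ioi_rpow_of_lt (by linarith) hℓ)

theorem integral_Ioi_rpow_neg_sub_one_mul_add {γ ℓ : ℝ} (hγ : 1 < γ) (hℓ : 0 < ℓ)
    (c : ℝ) :
    ∫ u in Ioi ℓ, u ^ (-γ - 1) * (c + u) =
      ℓ ^ (-γ) * (c * (γ - 1) + ℓ * γ) / (γ * (γ - 1)) := by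
  have hγ0 : γ ≠ 0 := by linarith
  have hγ1 : γ - 1 ≠ 0 := by linarith
  calc ∫ u in Ioi ℓ, u ^ (-γ - 1) * (c + u)
      = ∫ u in Ioi ℓ, (c * u ^ (-γ - 1) + u ^ (-γ)) :=
        setIntegral_congr_fun measurableSet_Ioi fun u hu =>
          rpow_neg_sub_one_mul_add γ c (hℓ.trans hu)
    _ = c * (∫ u in Ioi ℓ, u ^ (-γ - 1)) + ∫ u in Ioi ℓ, u ^ (-γ) := by
        rw [integral_add ((integrableOn_Ioi_rpow_of_lt (by linarith) hℓ).const_mul c)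
          (integrableOn_Ioi_rpow_of_lt (by linarith) hℓ), integral_const_mul]
    _ = c * (ℓ ^ (-γ) / γ) + ℓ ^ (-γ) * ℓ / (γ - 1) := by
        rw [integral_Ioi_rpow_of_lt (by linarith) hℓ, integral_Ioi_rpow_of_lt (by linarith) hℓ,
          sub_add_cancel, Real.rpow_add_one hℓ.ne', neg_add_eq_sub, ← neg_sub γ 1,
          neg_div_neg_eq, neg_div_neg_eq]
    _ = ℓ ^ (-γ) * (c * (γ - 1) + ℓ * γ) / (γ * (γ - 1)) := by
        field_simp

theorem muEll_Ici {γ ℓ t : ℝ} (hγ : 1 < γ) (hℓ : 0 < ℓ) (hℓt : ℓ ≤ t) :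
    muEll γ t (Ici ℓ) =
      ENNReal.ofReal (ℓ ^ (-γ) * (t * (γ - 1) + ℓ * (2 - γ)) / (γ * (γ - 1))) := by
  have hnonneg : ∀ᵐ u ∂volume.restrict (Ioi ℓ), 0 ≤ u ^ (-γ - 1) * (t - 2 * ℓ + u) := by
    filter_upwards [ae_restrict_mem measurableSet_Ioi] with u (hu : ℓ < u)
    exact mul_nonneg (Real.rpow_nonneg (hℓ.trans hu).le _) (by linarith)
  rw [muEll_Ici_eq_setLIntegral γ hℓ hℓt, ← ofReal_integral_eq_lintegral_ofReal
    (integrableOn_Ioi_rpow_neg_sub_one_mul_add hγ hℓ _) hnonneg,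
    integral_Ioi_rpow_neg_sub_one_mul_add hγ hℓ]
  congr 3
  ring

/-- For every `t > 0` and `ℓ₀ > 0`: `μ^ℓ_t([ℓ₀,∞)) ≤ t·ℓ₀^{-γ}/(γ(γ-1))`. -/
theorem stmt_8 (γ : ℝ) (hγ1 : 1 < γ) (hγ2 : γ < 2)
    (t : ℝ) (ht : 0 < t) (ℓ0 : ℝ) (hℓ0 : 0 < ℓ0) :
    muEll γ t (Set.Ici ℓ0) ≤ ENNReal.ofReal (t * ℓ0 ^ (-γ) / (γ * (γ - 1))) := by
  rcases lt_or_ge t ℓ0 with htℓ | hℓt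
  · rw [muEll_Ici_eq_zero γ hℓ0 htℓ]
    exact zero_le
  have hbracket : t * (γ - 1) + ℓ0 * (2 - γ) ≤ t := by
    linear_combination mul_le_mul_of_nonneg_right hℓt (sub_nonneg.2 hγ2.le)
  have hden : 0 ≤ γ * (γ - 1) := mul_nonneg (by linarith) (by linarith)
  rw [muEll_Ici hγ1 hℓ0 hℓt, mul_comm t (ℓ0 ^ (-γ))]
  exact ENNReal.ofReal_le_ofReal (div_le_div_of_nonneg_right
    (mul_le_mul_of_nonneg_left hbracket (Real.rpow_nonneg hℓ0.le _)) hden)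
end
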